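/- Let p ≥ 1 and let (X_i)_{i≥1} be a sequence of random variables on (Ω, 𝒜) that is IID under E̅, with E̅[X₁] = E̅[−X₁] = 0 and E̅[|X₁|^{p+1}] < ∞. Set S̄_n := S_n / √n. Assume that for every bounded continuous function φ : ℝ → ℝ with compact support the limit lim_{n→∞} E̅[φ(S̄_n)] exists. Then for every continuous function φ : ℝ → ℝ satisfying the growth condition |φ(x)| ≤ C(1 + |x|^p) for some constant C > 0, the limit lim_{n→∞} E̅[φ(S̄_n)] also exists. -/

import Mathlib

open MeasureTheory Filter Topology

/-- Upper expectation `E̅[X] = sup_{P ∈ 𝒬} E_P[X]` of a set of probability measures. -/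
noncomputable def upperExp {Ω : Type*} [MeasurableSpace Ω]
    (𝒬 : Set (Measure Ω)) (X : Ω → ℝ) : ℝ :=
  sSup ((fun P : Measure Ω => ∫ ω, X ω ∂P) '' 𝒬)

/-- `E̅[X]` is finite: `X` is integrable under each `P ∈ 𝒬` and the
integrals are bounded above. -/
def HasFiniteUpperExp {Ω : Type*} [MeasurableSpace Ω]
    (𝒬 : Set (Measure Ω)) (X : Ω → ℝ) : Prop :=
  (∀ P ∈ 𝒬, Integrable X P) ∧ BddAbove ((fun P : Measure Ω => ∫ ω, X ω ∂P) '' 𝒬)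

/-- Peng independence of a random variable `Y` from a random vector `X` under
the upper expectation associated with `𝒬`. -/
def PengIndep {Ω : Type*} [MeasurableSpace Ω]
    (𝒬 : Set (Measure Ω)) {d : ℕ} (X : Ω → (Fin d → ℝ)) (Y : Ω → ℝ) : Prop :=
  ∀ φ : (Fin d → ℝ) → ℝ → ℝ,
    Measurable (fun p : (Fin d → ℝ) × ℝ => φ p.1 p.2) →
    HasFiniteUpperExp 𝒬 (fun ω => φ (X ω) (Y ω)) →
    (∀ x, HasFiniteUpperExp 𝒬 (fun ω => φ x (Y ω))) →
    HasFiniteUpperExp 𝒬 (fun ω => upperExp 𝒬 (fun ω' => φ (X ω) (Y ω'))) →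
    upperExp 𝒬 (fun ω => φ (X ω) (Y ω)) =
      upperExp 𝒬 (fun ω => upperExp 𝒬 (fun ω' => φ (X ω) (Y ω')))

/-- A sequence `(X_i)` is IID under the upper expectation: each `X_i` has the
same distribution as `X_0` (tested against measurable functions with finite
expectations) and `X_{i+1}` is Peng-independent of `(X_0, …, X_i)`. -/
def IsIIDUnder {Ω : Type*} [MeasurableSpace Ω]
    (𝒬 : Set (Measure Ω)) (X : ℕ → Ω → ℝ) : Prop :=
  (∀ i, ∀ φ : ℝ → ℝ, Measurable φ →
      HasFiniteUpperExp 𝒬 (fun ω => φ (X i ω)) →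
      HasFiniteUpperExp 𝒬 (fun ω => φ (X 0 ω)) →
      upperExp 𝒬 (fun ω => φ (X i ω)) = upperExp 𝒬 (fun ω => φ (X 0 ω))) ∧
  (∀ i : ℕ, PengIndep 𝒬 (fun ω (j : Fin (i + 1)) => X (j : ℕ) ω) (X (i + 1)))

/-- Partial sum `S_n = X_0 + ⋯ + X_{n-1}` (the first `n` variables). -/
def partialSum {Ω : Type*} (X : ℕ → Ω → ℝ) (n : ℕ) (ω : Ω) : ℝ :=
  ∑ i ∈ Finset.range n, X i ω

/-- Normalized sum `S̄_n = S_n / √n`. -/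
noncomputable def normalizedSum {Ω : Type*} (X : ℕ → Ω → ℝ) (n : ℕ) (ω : Ω) : ℝ :=
  partialSum X n ω / Real.sqrt n

open Asymptotics

/-!
Peng independence together with `E̅[Y] = E̅[-Y] = 0` annihilates the first-order term in the
expansion of `|S + Y|^q`, so
`E̅[|S_{n+1}|^q] ≤ E̅[|S_n|^q] + C (E̅[|S_n|^{q-2}] E̅[X₁²] + E̅[|X₁|^q])`.
Bounding `t E̅[|S_n|^{q-2}]` by `E̅[|S_n|^q] + t^{q/2}` with `t` of order `n` gives
`E̅[|S_n|^q] = O(n^{q/2})`, that is, the `q`-th moments of `S̄_n` are bounded. A continuous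
`φ = o(|x|^q)` differs from a compactly supported function by at most `ε |x|^q`, so `E̅[φ(S̄_n)]`
is, uniformly in `n`, arbitrarily close to a convergent sequence.
-/

lemma add_rpow_le_two_rpow_mul {a b r : ℝ} (ha : 0 ≤ a) (hb : 0 ≤ b) (hr : 0 ≤ r) :
    (a + b) ^ r ≤ 2 ^ r * (a ^ r + b ^ r) := by
  calc (a + b) ^ r ≤ (2 * max a b) ^ r := by
        gcongr
        linarith [le_max_left a b, le_max_right a b]
    _ = 2 ^ r * max (a ^ r) (b ^ r) := by
        rw [Real.mul_rpow two_pos.le (le_max_of_le_left ha), Real.rpow_max ha hb hr]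
    _ ≤ 2 ^ r * (a ^ r + b ^ r) := by
        gcongr
        exact max_le_add_of_nonneg (by positivity) (by positivity)

lemma rpow_mul_rpow_le_add {a b r s : ℝ} (ha : 0 ≤ a) (hb : 0 ≤ b) (hr : 0 ≤ r) (hs : 0 ≤ s) :
    a ^ r * b ^ s ≤ a ^ (r + s) + b ^ (r + s) := by
  calc a ^ r * b ^ s ≤ max a b ^ r * max a b ^ s := by
        gcongr
        exacts [le_max_left a b, le_max_right a b]
    _ = max (a ^ (r + s)) (b ^ (r + s)) := by
        rw [← Real.rpow_add_of_nonneg (le_max_of_le_left ha) hr hs,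
          Real.rpow_max ha hb (add_nonneg hr hs)]
    _ ≤ a ^ (r + s) + b ^ (r + s) := max_le_add_of_nonneg (by positivity) (by positivity)

lemma rpow_sub_two_mul_sq_le_add {q : ℝ} (hq : 2 ≤ q) (x y : ℝ) :
    |x| ^ (q - 2) * y ^ 2 ≤ |x| ^ q + |y| ^ q := by
  simpa using rpow_mul_rpow_le_add (abs_nonneg x) (abs_nonneg y) (sub_nonneg.2 hq) two_pos.le

lemma abs_abs_rpow_sub_two_mul {q : ℝ} (hq : 2 ≤ q) (x : ℝ) :
    |(|x| ^ (q - 2) * x)| = |x| ^ (q - 1) := by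
  rw [abs_mul, abs_of_nonneg (by positivity), ← Real.rpow_add_one' (abs_nonneg x) (by linarith)]
  ring_nf

lemma abs_rpow_sub_rpow_le {r a b m : ℝ} (hr : 1 ≤ r) (ha : 0 ≤ a) (ham : a ≤ m) (hb : 0 ≤ b)
    (hbm : b ≤ m) : |a ^ r - b ^ r| ≤ r * m ^ (r - 1) * |a - b| := by
  refine (convex_Icc 0 m).norm_image_sub_le_of_norm_hasDerivWithin_le (f := fun s : ℝ => s ^ r)
    (fun s _ => (Real.hasDerivAt_rpow_const (Or.inr hr)).hasDerivWithinAt) (fun s hs => ?_)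
    ⟨hb, hbm⟩ ⟨ha, ham⟩
  have hs0 : 0 ≤ s := hs.1
  rw [Real.norm_of_nonneg (by positivity)]
  gcongr
  exact hs.2

lemma abs_signed_rpow_sub_le {r x y m : ℝ} (hr : 0 ≤ r) (hx : |x| ≤ m) (hy : |y| ≤ m) :
    |(|x| ^ r * x - |y| ^ r * y)| ≤ (r + 3) * m ^ r * |x - y| := by
  have hxy : |(|x| - |y|)| ≤ |x - y| := abs_abs_sub_abs_le x y
  have hm : 0 ≤ m := (abs_nonneg x).trans hx
  have hpow : |x| ^ r ≤ m ^ r := by gcongr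
  have hsplit : |x| ^ r * x - |y| ^ r * y = |x| ^ r * (x - y) + (|x| ^ r - |y| ^ r) * y := by ring
  have hfactor : |(|x| ^ r - |y| ^ r) * y| ≤ (r + 2) * m ^ r * |x - y| := by
    have habs : |(|x| ^ r - |y| ^ r) * y|
        = |(|x| ^ (r + 1) - |y| ^ (r + 1)) - |x| ^ r * (|x| - |y|)| := by
      rw [Real.rpow_add_one' (abs_nonneg x) (by linarith),
        Real.rpow_add_one' (abs_nonneg y) (by linarith), abs_mul, ← abs_abs y, ← abs_mul, abs_abs]
      ring_nf
    have hpow_sub : |(|x| ^ (r + 1) - |y| ^ (r + 1))| ≤ (r + 1) * m ^ r * |x - y| := by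
      have h := abs_rpow_sub_rpow_le (le_add_of_nonneg_left hr) (abs_nonneg x) hx (abs_nonneg y) hy
      rw [add_sub_cancel_right] at h
      exact h.trans (by gcongr)
    calc |(|x| ^ r - |y| ^ r) * y|
        ≤ |(|x| ^ (r + 1) - |y| ^ (r + 1))| + |(|x| ^ r * (|x| - |y|))| := habs ▸ abs_sub _ _
      _ ≤ (r + 1) * m ^ r * |x - y| + m ^ r * |x - y| := by
          rw [abs_mul (|x| ^ r), abs_of_nonneg (by positivity : 0 ≤ |x| ^ r)]
          gcongr
      _ = (r + 2) * m ^ r * |x - y| := by ring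
  calc |(|x| ^ r * x - |y| ^ r * y)|
      ≤ |x| ^ r * |x - y| + |(|x| ^ r - |y| ^ r) * y| := by
        rw [hsplit]
        refine (abs_add_le _ _).trans_eq ?_
        rw [abs_mul, abs_of_nonneg (by positivity : 0 ≤ |x| ^ r)]
    _ ≤ m ^ r * |x - y| + (r + 2) * m ^ r * |x - y| := by gcongr
    _ = (r + 3) * m ^ r * |x - y| := by ring

lemma abs_abs_add_rpow_sub_le {q : ℝ} (hq : 2 ≤ q) (x y : ℝ) :
    |(|x + y| ^ q - |x| ^ q - q * (|x| ^ (q - 2) * x * y))|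
      ≤ q * (q + 1) * (|x| + |y|) ^ (q - 2) * y ^ 2 := by
  set R : ℝ → ℝ := fun u => |u| ^ q - q * (|x| ^ (q - 2) * x) * u with hR
  have hderiv (u : ℝ) : HasDerivAt R (q * (|u| ^ (q - 2) * u - |x| ^ (q - 2) * x)) u :=
    ((hasDerivAt_abs_rpow u (by linarith : 1 < q)).sub
      ((hasDerivAt_id u).const_mul (q * (|x| ^ (q - 2) * x)))).congr_deriv (by ring)
  have hbound : ∀ u ∈ Metric.closedBall x |y|, ‖q * (|u| ^ (q - 2) * u - |x| ^ (q - 2) * x)‖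
      ≤ q * ((q + 1) * (|x| + |y|) ^ (q - 2) * |y|) := by
    intro u hu
    have hux : |u - x| ≤ |y| := hu
    have hum : |u| ≤ |x| + |y| := by linarith [abs_sub_abs_le_abs_sub u x]
    have h := abs_signed_rpow_sub_le (sub_nonneg.2 hq) hum (le_add_of_nonneg_right (abs_nonneg y))
    rw [Real.norm_eq_abs, abs_mul, abs_of_nonneg (by linarith : 0 ≤ q)]
    gcongr
    refine h.trans ?_
    rw [show q - 2 + 3 = q + 1 by ring]
    gcongr
  have hmvt := (convex_closedBall x |y|).norm_image_sub_le_of_norm_hasDerivWithin_le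
    (fun u _ => (hderiv u).hasDerivWithinAt) hbound (Metric.mem_closedBall_self (abs_nonneg y))
    (by simp : x + y ∈ Metric.closedBall x |y|)
  calc |(|x + y| ^ q - |x| ^ q - q * (|x| ^ (q - 2) * x * y))| = ‖R (x + y) - R x‖ := by
        rw [Real.norm_eq_abs, hR]
        ring_nf
    _ ≤ q * ((q + 1) * (|x| + |y|) ^ (q - 2) * |y|) * ‖x + y - x‖ := hmvt
    _ = q * (q + 1) * (|x| + |y|) ^ (q - 2) * y ^ 2 := by
        rw [add_sub_cancel_left, Real.norm_eq_abs, ← sq_abs y]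
        ring

lemma abs_add_rpow_le {q : ℝ} (hq : 2 ≤ q) (x y : ℝ) :
    |x + y| ^ q ≤ |x| ^ q + q * (|x| ^ (q - 2) * x * y)
      + q * (q + 1) * 2 ^ (q - 2) * (|x| ^ (q - 2) * y ^ 2 + |y| ^ q) := by
  have hq' : 0 ≤ q - 2 := sub_nonneg.2 hq
  have hy : |y| ^ (q - 2) * y ^ 2 = |y| ^ q := by
    rw [← sq_abs, ← Real.rpow_two, ← Real.rpow_add_of_nonneg (abs_nonneg y) hq' two_pos.le,
      sub_add_cancel]
  have hremainder : q * (q + 1) * (|x| + |y|) ^ (q - 2) * y ^ 2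
      ≤ q * (q + 1) * 2 ^ (q - 2) * (|x| ^ (q - 2) * y ^ 2 + |y| ^ q) :=
    calc q * (q + 1) * (|x| + |y|) ^ (q - 2) * y ^ 2
        ≤ q * (q + 1) * (2 ^ (q - 2) * (|x| ^ (q - 2) + |y| ^ (q - 2))) * y ^ 2 := by
          gcongr
          exact add_rpow_le_two_rpow_mul (abs_nonneg x) (abs_nonneg y) hq'
      _ = q * (q + 1) * 2 ^ (q - 2) * (|x| ^ (q - 2) * y ^ 2 + |y| ^ q) := by rw [← hy]; ring
  linarith [(abs_le.1 (abs_abs_add_rpow_sub_le hq x y)).2]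

-- With `t = τ (n + 1)`, the increment has order `(n + 1) ^ (s - 1)`, and taking `τ` large
-- keeps the coefficient of `a n` below the growth rate of `K (n + 1) ^ s`.
lemma exists_le_mul_rpow_of_recursion {s A B : ℝ} (hs : 1 ≤ s) (hA : 0 ≤ A) (hB : 0 ≤ B)
    {a : ℕ → ℝ} (hzero : a 0 ≤ B)
    (hsucc : ∀ n, ∀ t > 0, a (n + 1) ≤ a n + A * ((a n + t ^ s) / t) + B) :
    ∃ K, 0 ≤ K ∧ ∀ n : ℕ, a n ≤ K * ((n : ℝ) + 1) ^ s := by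
  set τ := 2 * (A + 1)
  set D := τ ^ s + B with hD
  have hD0 : 0 ≤ D := by positivity
  refine ⟨2 * D, by positivity, fun n => ?_⟩
  induction n with
  | zero =>
    have : 0 ≤ τ ^ s := by positivity
    simp only [Nat.cast_zero, zero_add, Real.one_rpow, mul_one]
    linarith
  | succ n ih =>
    set N : ℝ := n + 1 with hN
    have hN1 : 1 ≤ N := by simp [hN]
    have hNs : N ^ s = N ^ (s - 1) * N := by
      rw [← Real.rpow_add_one (by positivity), sub_add_cancel]
    have hNpow : 1 ≤ N ^ (s - 1) := Real.one_le_rpow hN1 (by linarith)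
    have hratio : A * ((a n + (τ * N) ^ s) / (τ * N)) ≤ (D + τ ^ s) * N ^ (s - 1) := by
      have hA_le : A / τ ≤ 1 / 2 := by
        rw [div_le_div_iff₀ (by positivity) two_pos]
        linarith
      calc A * ((a n + (τ * N) ^ s) / (τ * N))
          ≤ A * ((2 * D * N ^ s + (τ * N) ^ s) / (τ * N)) := by gcongr
        _ = A / τ * (2 * D + τ ^ s) * N ^ (s - 1) := by
            rw [Real.mul_rpow (by positivity) (by positivity), hNs]
            field_simp
        _ ≤ 1 / 2 * (2 * D + τ ^ s) * N ^ (s - 1) := by gcongr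
        _ ≤ (D + τ ^ s) * N ^ (s - 1) := by
            gcongr
            linarith [show 0 ≤ τ ^ s by positivity]
    calc a (n + 1) ≤ a n + A * ((a n + (τ * N) ^ s) / (τ * N)) + B := hsucc n _ (by positivity)
      _ ≤ 2 * D * N ^ s + (D + τ ^ s) * N ^ (s - 1) + B * N ^ (s - 1) := by
          gcongr
          exact le_mul_of_one_le_right hB hNpow
      _ = 2 * D * (N ^ (s - 1) * (N + 1)) := by rw [hNs, hD]; ring
      _ ≤ 2 * D * ((N + 1) ^ (s - 1) * (N + 1)) := by
          gcongr
          linarith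
      _ = 2 * D * (((n + 1 : ℕ) : ℝ) + 1) ^ s := by
          rw [← Real.rpow_add_one (by positivity), sub_add_cancel]; push_cast; rfl

lemma isLittleO_abs_rpow_of_growth {φ : ℝ → ℝ} {C p q : ℝ} (hq : 0 < q) (hpq : p < q)
    (hφ : ∀ x, |φ x| ≤ C * (1 + |x| ^ p)) : φ =o[cocompact ℝ] fun x => |x| ^ q := by
  have hone : (fun _ => 1 : ℝ → ℝ) =o[atTop] fun u => u ^ q :=
    isLittleO_const_left.2 (Or.inr (tendsto_norm_atTop_atTop.comp (tendsto_rpow_atTop hq)))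
  have hpow : (fun u : ℝ => u ^ p) =o[atTop] fun u => u ^ q := by
    refine isLittleO_of_tendsto' ?_ ((tendsto_rpow_neg_atTop (sub_pos.2 hpq)).congr' ?_)
    · filter_upwards [eventually_gt_atTop 0] with u hu h
      exact absurd h (Real.rpow_pos_of_pos hu q).ne'
    · filter_upwards [eventually_gt_atTop 0] with u hu
      rw [← Real.rpow_sub hu, neg_sub]
  have hC : 0 ≤ C := by
    have hφ1 := (abs_nonneg _).trans (hφ 1)
    rw [abs_one, Real.one_rpow] at hφ1
    linarith
  exact (IsBigO.of_bound C (Eventually.of_forall fun x => (hφ x).trans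
    (mul_le_mul_of_nonneg_left (le_abs_self _) hC))).trans_isLittleO
    ((hone.add hpow).comp_tendsto (tendsto_norm_cocompact_atTop (E := ℝ)))

lemma exists_hasCompactSupport_abs_sub_le {E : Type*} [TopologicalSpace E] [R1Space E]
    [LocallyCompactSpace E] {φ w : E → ℝ} (hφ : Continuous φ) (hφw : φ =o[cocompact E] w)
    {ε : ℝ} (hε : 0 < ε) :
    ∃ ψ : E → ℝ, Continuous ψ ∧ HasCompactSupport ψ ∧ ∀ x, |φ x - ψ x| ≤ ε * |w x| := by
  obtain ⟨K, hK, hKc⟩ := mem_cocompact.1 (hφw.def hε)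
  obtain ⟨χ, hχK, -, hχsupp, hχ⟩ :=
    exists_continuous_one_zero_of_isCompact hK isClosed_empty (Set.disjoint_empty K)
  refine ⟨fun x => φ x * χ x, hφ.mul χ.continuous, hχsupp.mul_left, fun x => ?_⟩
  by_cases hx : x ∈ K
  · dsimp only
    rw [hχK hx, Pi.one_apply, mul_one, sub_self, abs_zero]
    positivity
  · calc |φ x - φ x * χ x| = |φ x| * (1 - χ x) := by
          rw [← mul_one_sub, abs_mul, abs_of_nonneg (sub_nonneg.2 (hχ x).2)]
      _ ≤ |φ x| := mul_le_of_le_one_right (abs_nonneg _) (by linarith [(hχ x).1])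
      _ ≤ ε * |w x| := hKc hx

lemma exists_tendsto_of_forall_approx {ι α : Type*} [PseudoMetricSpace α] [CompleteSpace α]
    {l : Filter ι} [l.NeBot] {f : ι → α}
    (h : ∀ ε > 0, ∃ g : ι → α, (∃ L, Tendsto g l (𝓝 L)) ∧ ∀ i, dist (f i) (g i) ≤ ε) :
    ∃ L, Tendsto f l (𝓝 L) := by
  refine cauchy_map_iff_exists_tendsto.1 (Metric.cauchy_iff.2 ⟨inferInstance, fun ε hε => ?_⟩)
  obtain ⟨g, ⟨L, hL⟩, hfg⟩ := h (ε / 4) (by positivity)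
  refine ⟨Metric.ball L (ε / 2), ?_, fun x hx y hy => ?_⟩
  · rw [mem_map]
    filter_upwards [hL.eventually (Metric.ball_mem_nhds L (by positivity : 0 < ε / 4))] with i hi
    calc dist (f i) L ≤ dist (f i) (g i) + dist (g i) L := dist_triangle _ _ _
      _ < ε / 4 + ε / 4 := add_lt_add_of_le_of_lt (hfg i) hi
      _ = ε / 2 := by ring
  · calc dist x y ≤ dist x L + dist y L := dist_triangle_right _ _ _
      _ < ε / 2 + ε / 2 := add_lt_add hx hy
      _ = ε := add_halves ε

lemma partialSum_zero {Ω : Type*} (X : ℕ → Ω → ℝ) (ω : Ω) : partialSum X 0 ω = 0 := rfl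

lemma partialSum_succ {Ω : Type*} (X : ℕ → Ω → ℝ) (n : ℕ) (ω : Ω) :
    partialSum X (n + 1) ω = partialSum X n ω + X n ω :=
  Finset.sum_range_succ _ n

section UpperExpectation

variable {Ω : Type*} [MeasurableSpace Ω] {𝒬 : Set (Measure Ω)} {f g : Ω → ℝ}

lemma HasFiniteUpperExp.integral_le (hf : HasFiniteUpperExp 𝒬 f) {P : Measure Ω} (hP : P ∈ 𝒬) :
    ∫ ω, f ω ∂P ≤ upperExp 𝒬 f :=
  le_csSup hf.2 (Set.mem_image_of_mem _ hP)

lemma HasFiniteUpperExp.of_integral_le {B : ℝ} (hf : ∀ P ∈ 𝒬, Integrable f P)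
    (hB : ∀ P ∈ 𝒬, ∫ ω, f ω ∂P ≤ B) : HasFiniteUpperExp 𝒬 f :=
  ⟨hf, B, Set.forall_mem_image.2 hB⟩

lemma upperExp_le (h𝒬 : 𝒬.Nonempty) {B : ℝ} (hB : ∀ P ∈ 𝒬, ∫ ω, f ω ∂P ≤ B) :
    upperExp 𝒬 f ≤ B :=
  csSup_le (h𝒬.image _) (Set.forall_mem_image.2 hB)

lemma hasFiniteUpperExp_const (hprob : ∀ P ∈ 𝒬, IsProbabilityMeasure P) (c : ℝ) :
    HasFiniteUpperExp 𝒬 fun _ => c :=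
  .of_integral_le (fun _ hP => have := hprob _ hP; integrable_const c)
    fun P hP => have := hprob P hP; (by simp : ∫ _, c ∂P = c).le

lemma HasFiniteUpperExp.add (hf : HasFiniteUpperExp 𝒬 f) (hg : HasFiniteUpperExp 𝒬 g) :
    HasFiniteUpperExp 𝒬 fun ω => f ω + g ω :=
  .of_integral_le (fun P hP => (hf.1 P hP).add (hg.1 P hP)) fun P hP =>
    (integral_add (hf.1 P hP) (hg.1 P hP)).trans_le
      (add_le_add (hf.integral_le hP) (hg.integral_le hP))

lemma HasFiniteUpperExp.const_mul (hf : HasFiniteUpperExp 𝒬 f) {c : ℝ} (hc : 0 ≤ c) :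
    HasFiniteUpperExp 𝒬 fun ω => c * f ω :=
  .of_integral_le (fun P hP => (hf.1 P hP).const_mul c) fun _ hP =>
    (integral_const_mul c f).trans_le (mul_le_mul_of_nonneg_left (hf.integral_le hP) hc)

lemma HasFiniteUpperExp.mono (hg : HasFiniteUpperExp 𝒬 g) (hf : Measurable f)
    (hfg : ∀ ω, |f ω| ≤ g ω) : HasFiniteUpperExp 𝒬 f := by
  have hint (P : Measure Ω) (hP : P ∈ 𝒬) : Integrable f P :=
    (hg.1 P hP).mono' hf.aestronglyMeasurable (Eventually.of_forall hfg)
  exact .of_integral_le hint fun P hP =>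
    (integral_mono (hint P hP) (hg.1 P hP) fun ω => (le_abs_self _).trans (hfg ω)).trans
      (hg.integral_le hP)

lemma HasFiniteUpperExp.abs_rpow_of_le (hprob : ∀ P ∈ 𝒬, IsProbabilityMeasure P) {q r : ℝ}
    (hr : 0 ≤ r) (hrq : r ≤ q) (hf : Measurable f)
    (hfq : HasFiniteUpperExp 𝒬 fun ω => |f ω| ^ q) : HasFiniteUpperExp 𝒬 fun ω => |f ω| ^ r := by
  refine (hfq.add (hasFiniteUpperExp_const hprob 1)).mono (by fun_prop) fun ω => ?_
  simpa [abs_of_nonneg, Real.rpow_nonneg] using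
    rpow_mul_rpow_le_add (abs_nonneg (f ω)) zero_le_one hr (sub_nonneg.2 hrq)

lemma HasFiniteUpperExp.abs_add_rpow {q : ℝ} (hq : 0 ≤ q) (hf : Measurable f) (hg : Measurable g)
    (hfq : HasFiniteUpperExp 𝒬 fun ω => |f ω| ^ q) (hgq : HasFiniteUpperExp 𝒬 fun ω => |g ω| ^ q) :
    HasFiniteUpperExp 𝒬 fun ω => |f ω + g ω| ^ q := by
  refine ((hfq.add hgq).const_mul (by positivity : (0 : ℝ) ≤ 2 ^ q)).mono (by fun_prop) fun ω => ?_
  rw [abs_of_nonneg (by positivity)]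
  exact (Real.rpow_le_rpow (abs_nonneg _) (abs_add_le _ _) hq).trans
    (add_rpow_le_two_rpow_mul (abs_nonneg _) (abs_nonneg _) hq)

lemma HasFiniteUpperExp.abs_of_abs_rpow (hprob : ∀ P ∈ 𝒬, IsProbabilityMeasure P) {q : ℝ}
    (hq : 1 ≤ q) (hf : Measurable f) (hfq : HasFiniteUpperExp 𝒬 fun ω => |f ω| ^ q) :
    HasFiniteUpperExp 𝒬 fun ω => |f ω| := by
  simpa only [Real.rpow_one] using hfq.abs_rpow_of_le hprob zero_le_one hq hf

lemma HasFiniteUpperExp.sq_of_abs_rpow (hprob : ∀ P ∈ 𝒬, IsProbabilityMeasure P) {q : ℝ}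
    (hq : 2 ≤ q) (hf : Measurable f) (hfq : HasFiniteUpperExp 𝒬 fun ω => |f ω| ^ q) :
    HasFiniteUpperExp 𝒬 fun ω => f ω ^ 2 := by
  simpa only [Real.rpow_two, sq_abs] using hfq.abs_rpow_of_le hprob two_pos.le hq hf

lemma HasFiniteUpperExp.abs_rpow_sub_two_mul_mul {q : ℝ} (hq : 2 ≤ q) (hf : Measurable f)
    (hg : Measurable g) (hfq : HasFiniteUpperExp 𝒬 fun ω => |f ω| ^ q)
    (hgq : HasFiniteUpperExp 𝒬 fun ω => |g ω| ^ q) :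
    HasFiniteUpperExp 𝒬 fun ω => |f ω| ^ (q - 2) * f ω * g ω := by
  refine (hfq.add hgq).mono (by fun_prop) fun ω => ?_
  rw [abs_mul, abs_abs_rpow_sub_two_mul hq]
  simpa only [Real.rpow_one, sub_add_cancel] using rpow_mul_rpow_le_add (abs_nonneg (f ω))
    (abs_nonneg (g ω)) (by linarith : 0 ≤ q - 1) zero_le_one

lemma HasFiniteUpperExp.abs_rpow_sub_two_mul_sq {q : ℝ} (hq : 2 ≤ q) (hf : Measurable f)
    (hg : Measurable g) (hfq : HasFiniteUpperExp 𝒬 fun ω => |f ω| ^ q)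
    (hgq : HasFiniteUpperExp 𝒬 fun ω => |g ω| ^ q) :
    HasFiniteUpperExp 𝒬 fun ω => |f ω| ^ (q - 2) * g ω ^ 2 :=
  (hfq.add hgq).mono (by fun_prop) fun ω =>
    (abs_of_nonneg (by positivity)).trans_le (rpow_sub_two_mul_sq_le_add hq _ _)

lemma upperExp_mono (h𝒬 : 𝒬.Nonempty) (hf : HasFiniteUpperExp 𝒬 f) (hg : HasFiniteUpperExp 𝒬 g)
    (hfg : ∀ ω, f ω ≤ g ω) : upperExp 𝒬 f ≤ upperExp 𝒬 g :=
  upperExp_le h𝒬 fun P hP =>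
    (integral_mono (hf.1 P hP) (hg.1 P hP) hfg).trans (hg.integral_le hP)

lemma upperExp_const (h𝒬 : 𝒬.Nonempty) (hprob : ∀ P ∈ 𝒬, IsProbabilityMeasure P) (c : ℝ) :
    upperExp 𝒬 (fun _ => c) = c := by
  have hc (P : Measure Ω) (hP : P ∈ 𝒬) : ∫ _, c ∂P = c := by
    have := hprob P hP
    simp
  obtain ⟨P, hP⟩ := h𝒬
  exact le_antisymm (upperExp_le ⟨P, hP⟩ fun P hP => (hc P hP).le)
    ((hc P hP).ge.trans ((hasFiniteUpperExp_const hprob c).integral_le hP))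

lemma upperExp_nonneg (hf : ∀ ω, 0 ≤ f ω) : 0 ≤ upperExp 𝒬 f :=
  Real.sSup_nonneg (Set.forall_mem_image.2 fun _ _ => integral_nonneg hf)

lemma upperExp_add_le (h𝒬 : 𝒬.Nonempty) (hf : HasFiniteUpperExp 𝒬 f)
    (hg : HasFiniteUpperExp 𝒬 g) :
    upperExp 𝒬 (fun ω => f ω + g ω) ≤ upperExp 𝒬 f + upperExp 𝒬 g :=
  upperExp_le h𝒬 fun P hP => (integral_add (hf.1 P hP) (hg.1 P hP)).trans_le
    (add_le_add (hf.integral_le hP) (hg.integral_le hP))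

lemma abs_upperExp_sub_le (h𝒬 : 𝒬.Nonempty) (hf : HasFiniteUpperExp 𝒬 f)
    (hg : HasFiniteUpperExp 𝒬 g) {e : Ω → ℝ} (he : HasFiniteUpperExp 𝒬 e)
    (hfg : ∀ ω, |f ω - g ω| ≤ e ω) : |upperExp 𝒬 f - upperExp 𝒬 g| ≤ upperExp 𝒬 e := by
  have hfge : upperExp 𝒬 f ≤ upperExp 𝒬 g + upperExp 𝒬 e :=
    (upperExp_mono h𝒬 hf (hg.add he) fun ω => by linarith [(abs_le.1 (hfg ω)).2]).trans
      (upperExp_add_le h𝒬 hg he)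
  have hgfe : upperExp 𝒬 g ≤ upperExp 𝒬 f + upperExp 𝒬 e :=
    (upperExp_mono h𝒬 hg (hf.add he) fun ω => by linarith [(abs_le.1 (hfg ω)).1]).trans
      (upperExp_add_le h𝒬 hf he)
  exact abs_le.2 ⟨by linarith, by linarith⟩

lemma upperExp_const_mul {c : ℝ} (hc : 0 ≤ c) (f : Ω → ℝ) :
    upperExp 𝒬 (fun ω => c * f ω) = c * upperExp 𝒬 f := by
  simp only [upperExp, integral_const_mul]
  rw [← smul_eq_mul, ← Real.sSup_smul_of_nonneg hc, ← Set.image_smul, Set.image_image]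
  rfl

lemma mul_upperExp_abs_rpow_sub_two_le (h𝒬 : 𝒬.Nonempty)
    (hprob : ∀ P ∈ 𝒬, IsProbabilityMeasure P) {q t : ℝ} (hq : 2 ≤ q) (ht : 0 ≤ t)
    (hf : Measurable f) (hfq : HasFiniteUpperExp 𝒬 fun ω => |f ω| ^ q) :
    t * upperExp 𝒬 (fun ω => |f ω| ^ (q - 2)) ≤ upperExp 𝒬 (fun ω => |f ω| ^ q) + t ^ (q / 2) := by
  have hsqrt : |√t| ^ q = t ^ (q / 2) := by
    rw [abs_of_nonneg t.sqrt_nonneg, Real.sqrt_eq_rpow, ← Real.rpow_mul ht]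
    ring_nf
  have hconst := hasFiniteUpperExp_const hprob (t ^ (q / 2))
  have hlow :=
    (hfq.abs_rpow_of_le hprob (sub_nonneg.2 hq) (sub_le_self q two_pos.le) hf).const_mul ht
  rw [← upperExp_const_mul ht, ← upperExp_const h𝒬 hprob (t ^ (q / 2))]
  refine (upperExp_mono h𝒬 hlow (hfq.add hconst) fun ω => ?_).trans (upperExp_add_le h𝒬 hfq hconst)
  have h := rpow_sub_two_mul_sq_le_add hq (f ω) √t
  rwa [Real.sq_sqrt ht, hsqrt, mul_comm] at h

lemma upperExp_sq_le (h𝒬 : 𝒬.Nonempty) (hprob : ∀ P ∈ 𝒬, IsProbabilityMeasure P) {q : ℝ}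
    (hq : 2 ≤ q) (hf : Measurable f) (hfq : HasFiniteUpperExp 𝒬 fun ω => |f ω| ^ q) :
    upperExp 𝒬 (fun ω => f ω ^ 2) ≤ upperExp 𝒬 (fun ω => |f ω| ^ q) + 1 := by
  have hone := hasFiniteUpperExp_const hprob 1
  rw [← upperExp_const h𝒬 hprob 1]
  refine (upperExp_mono h𝒬 (hfq.sq_of_abs_rpow hprob hq hf) (hfq.add hone) fun ω => ?_).trans
    (upperExp_add_le h𝒬 hfq hone)
  simpa [add_comm] using rpow_sub_two_mul_sq_le_add hq 1 (f ω)

lemma upperExp_const_mul_eq_zero (hf : upperExp 𝒬 f = 0) (hf' : upperExp 𝒬 (fun ω => -f ω) = 0)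
    (c : ℝ) : upperExp 𝒬 (fun ω => c * f ω) = 0 := by
  rcases le_total 0 c with hc | hc
  · rw [upperExp_const_mul hc, hf, mul_zero]
  · have h := upperExp_const_mul (𝒬 := 𝒬) (neg_nonneg.2 hc) fun ω => -f ω
    simpa [hf'] using h

theorem exists_tendsto_upperExp_of_isLittleO {E : Type*} [TopologicalSpace E] [R1Space E]
    [LocallyCompactSpace E] [MeasurableSpace E] [OpensMeasurableSpace E] (h𝒬 : 𝒬.Nonempty)
    (hprob : ∀ P ∈ 𝒬, IsProbabilityMeasure P) {Y : ℕ → Ω → E} (hY : ∀ n, Measurable (Y n))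
    {w : E → ℝ} {K : ℝ} (hw : ∀ x, 0 ≤ w x) (hwY : ∀ n, HasFiniteUpperExp 𝒬 fun ω => w (Y n ω))
    (hK : ∀ n, upperExp 𝒬 (fun ω => w (Y n ω)) ≤ K)
    (hcs : ∀ ψ : E → ℝ, Continuous ψ → HasCompactSupport ψ →
      ∃ L : ℝ, Tendsto (fun n => upperExp 𝒬 fun ω => ψ (Y n ω)) atTop (𝓝 L))
    {φ : E → ℝ} (hφ : Continuous φ) (hφw : φ =o[cocompact E] w) :
    ∃ L : ℝ, Tendsto (fun n => upperExp 𝒬 fun ω => φ (Y n ω)) atTop (𝓝 L) := by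
  have hK0 : 0 ≤ K := (upperExp_nonneg fun ω => hw (Y 0 ω)).trans (hK 0)
  refine exists_tendsto_of_forall_approx fun ε hε => ?_
  have hδ : 0 < ε / (K + 1) := by positivity
  obtain ⟨ψ, hψ, hψsupp, hφψ⟩ := exists_hasCompactSupport_abs_sub_le hφ hφw hδ
  obtain ⟨B, hB⟩ := hψ.bounded_above_of_compact_support hψsupp
  refine ⟨_, hcs ψ hψ hψsupp, fun n => ?_⟩
  have hψY : HasFiniteUpperExp 𝒬 fun ω => ψ (Y n ω) :=
    (hasFiniteUpperExp_const hprob B).mono (hψ.measurable.comp (hY n)) fun ω => hB _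
  have herr := (hwY n).const_mul hδ.le
  have herr_le : upperExp 𝒬 (fun ω => ε / (K + 1) * w (Y n ω)) ≤ ε := by
    rw [upperExp_const_mul hδ.le, div_mul_eq_mul_div, div_le_iff₀ (by positivity)]
    exact mul_le_mul_of_nonneg_left ((hK n).trans (by linarith)) hε.le
  have hclose (x : E) : |φ x - ψ x| ≤ ε / (K + 1) * w x :=
    (hφψ x).trans_eq (by rw [abs_of_nonneg (hw x)])
  have hφY : HasFiniteUpperExp 𝒬 fun ω => φ (Y n ω) :=
    ((hasFiniteUpperExp_const hprob B).add herr).mono (hφ.measurable.comp (hY n)) fun ω => by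
      have := abs_sub_abs_le_abs_sub (φ (Y n ω)) (ψ (Y n ω))
      linarith [hclose (Y n ω), hB (Y n ω), Real.norm_eq_abs (ψ (Y n ω))]
  exact (abs_upperExp_sub_le h𝒬 hφY hψY herr fun ω => hclose _).trans herr_le

lemma integrable_and_integral_le_of_forall_integral_min_le {P : Measure Ω} [IsFiniteMeasure P]
    (hf : Measurable f) (hf0 : ∀ ω, 0 ≤ f ω) {M : ℝ}
    (hM : ∀ N : ℕ, ∫ ω, min (f ω) N ∂P ≤ M) : Integrable f P ∧ ∫ ω, f ω ∂P ≤ M := by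
  have hlim : Tendsto (fun N : ℕ => ∫⁻ ω, ENNReal.ofReal (min (f ω) N) ∂P) atTop
      (𝓝 (∫⁻ ω, ENNReal.ofReal (f ω) ∂P)) := by
    refine lintegral_tendsto_of_tendsto_of_monotone (fun N => by fun_prop)
      (Eventually.of_forall fun ω N N' h => ?_) (Eventually.of_forall fun ω => ?_)
    · dsimp only
      gcongr
    · refine tendsto_const_nhds.congr' ?_
      filter_upwards [eventually_ge_atTop ⌈f ω⌉₊] with N hN
      rw [min_eq_left (Nat.ceil_le.1 hN)]
  have hle : ∫⁻ ω, ENNReal.ofReal (f ω) ∂P ≤ ENNReal.ofReal M := by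
    refine le_of_tendsto' hlim fun N => ?_
    have hmin0 (ω : Ω) : 0 ≤ min (f ω) N := le_min (hf0 ω) N.cast_nonneg
    have hint : Integrable (fun ω => min (f ω) N) P :=
      .of_bound (by fun_prop) N (Eventually.of_forall fun ω => by
        rw [Real.norm_of_nonneg (hmin0 ω)]
        exact min_le_right _ _)
    rw [← ofReal_integral_eq_lintegral_ofReal hint (Eventually.of_forall hmin0)]
    exact ENNReal.ofReal_le_ofReal (hM N)
  have hM0 : 0 ≤ M := (integral_nonneg fun ω => le_min (hf0 ω) (Nat.cast_nonneg 0)).trans (hM 0)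
  rw [integral_eq_lintegral_of_nonneg_ae (Eventually.of_forall hf0) hf.aestronglyMeasurable]
  exact ⟨(lintegral_ofReal_ne_top_iff_integrable hf.aestronglyMeasurable
    (Eventually.of_forall hf0)).1 (hle.trans_lt ENNReal.ofReal_lt_top).ne,
    ENNReal.toReal_le_of_le_ofReal hM0 hle⟩

section PengIndep

variable {d : ℕ} {Z : Ω → Fin d → ℝ} {Y : Ω → ℝ} {h : (Fin d → ℝ) → ℝ}

lemma PengIndep.upperExp_mul (hZY : PengIndep 𝒬 Z Y) (hh : Measurable h) (hh0 : ∀ z, 0 ≤ h z)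
    {k : ℝ → ℝ} (hk : Measurable k) (hhZ : HasFiniteUpperExp 𝒬 fun ω => h (Z ω))
    (hkY : HasFiniteUpperExp 𝒬 fun ω => k (Y ω)) (hkY0 : 0 ≤ upperExp 𝒬 fun ω => k (Y ω))
    (hhk : HasFiniteUpperExp 𝒬 fun ω => h (Z ω) * k (Y ω)) :
    upperExp 𝒬 (fun ω => h (Z ω) * k (Y ω))
      = upperExp 𝒬 (fun ω => h (Z ω)) * upperExp 𝒬 (fun ω => k (Y ω)) := by
  have hinner (z : Fin d → ℝ) : upperExp 𝒬 (fun ω => h z * k (Y ω))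
      = upperExp 𝒬 (fun ω => k (Y ω)) * h z := by
    rw [upperExp_const_mul (hh0 z), mul_comm]
  rw [hZY (fun z y => h z * k y) (by fun_prop) hhk (fun z => hkY.const_mul (hh0 z))
    (by simpa only [hinner] using hhZ.const_mul hkY0)]
  simp only [hinner]
  rw [upperExp_const_mul hkY0, mul_comm]

lemma PengIndep.upperExp_mul_eq_zero (h𝒬 : 𝒬.Nonempty)
    (hprob : ∀ P ∈ 𝒬, IsProbabilityMeasure P) (hZY : PengIndep 𝒬 Z Y) (hh : Measurable h)
    (hY : Measurable Y) (hYabs : HasFiniteUpperExp 𝒬 fun ω => |Y ω|) (hmean : upperExp 𝒬 Y = 0)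
    (hmean' : upperExp 𝒬 (fun ω => -Y ω) = 0)
    (hhY : HasFiniteUpperExp 𝒬 fun ω => h (Z ω) * Y ω) :
    upperExp 𝒬 (fun ω => h (Z ω) * Y ω) = 0 := by
  have hinner (z : Fin d → ℝ) : upperExp 𝒬 (fun ω => h z * Y ω) = 0 :=
    upperExp_const_mul_eq_zero hmean hmean' (h z)
  rw [hZY (fun z y => h z * y) (by fun_prop) hhY
    (fun z => (hYabs.const_mul (abs_nonneg (h z))).mono (by fun_prop) fun ω => (abs_mul _ _).le)
    (by simpa only [hinner] using hasFiniteUpperExp_const hprob 0)]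
  simp only [hinner]
  exact upperExp_const h𝒬 hprob 0

lemma PengIndep.upperExp_abs_add_rpow_le (h𝒬 : 𝒬.Nonempty)
    (hprob : ∀ P ∈ 𝒬, IsProbabilityMeasure P) {q : ℝ} (hq : 2 ≤ q) (hZY : PengIndep 𝒬 Z Y)
    (hZ : Measurable Z) (hY : Measurable Y) (hh : Measurable h)
    (hmean : upperExp 𝒬 Y = 0) (hmean' : upperExp 𝒬 (fun ω => -Y ω) = 0)
    (hhq : HasFiniteUpperExp 𝒬 fun ω => |h (Z ω)| ^ q)
    (hYq : HasFiniteUpperExp 𝒬 fun ω => |Y ω| ^ q) :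
    upperExp 𝒬 (fun ω => |h (Z ω) + Y ω| ^ q) ≤ upperExp 𝒬 (fun ω => |h (Z ω)| ^ q)
      + q * (q + 1) * 2 ^ (q - 2) * (upperExp 𝒬 (fun ω => |h (Z ω)| ^ (q - 2))
        * upperExp 𝒬 (fun ω => Y ω ^ 2) + upperExp 𝒬 (fun ω => |Y ω| ^ q)) := by
  have hq0 : 0 ≤ q := two_pos.le.trans hq
  have hC : 0 ≤ q * (q + 1) * 2 ^ (q - 2) := by positivity
  have hcross : HasFiniteUpperExp 𝒬 fun ω => |h (Z ω)| ^ (q - 2) * h (Z ω) * Y ω :=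
    hhq.abs_rpow_sub_two_mul_mul hq (by fun_prop) hY hYq
  have hquad : HasFiniteUpperExp 𝒬 fun ω => |h (Z ω)| ^ (q - 2) * Y ω ^ 2 :=
    hhq.abs_rpow_sub_two_mul_sq hq (by fun_prop) hY hYq
  have hhlow : HasFiniteUpperExp 𝒬 fun ω => |h (Z ω)| ^ (q - 2) :=
    hhq.abs_rpow_of_le hprob (sub_nonneg.2 hq) (sub_le_self q two_pos.le) (by fun_prop)
  have hcross0 : upperExp 𝒬 (fun ω => |h (Z ω)| ^ (q - 2) * h (Z ω) * Y ω) = 0 :=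
    hZY.upperExp_mul_eq_zero h𝒬 hprob (h := fun z => |h z| ^ (q - 2) * h z) (by fun_prop) hY
      (hYq.abs_of_abs_rpow hprob (one_le_two.trans hq) hY) hmean hmean' hcross
  rw [← hZY.upperExp_mul (h := fun z => |h z| ^ (q - 2)) (k := fun y => y ^ 2) (by fun_prop)
    (fun z => by positivity) (by fun_prop) hhlow (hYq.sq_of_abs_rpow hprob hq hY)
    (upperExp_nonneg fun ω => sq_nonneg _) hquad]
  have hfirst := hhq.add (hcross.const_mul hq0)
  have hsecond := (hquad.add hYq).const_mul hC
  calc upperExp 𝒬 (fun ω => |h (Z ω) + Y ω| ^ q)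
      ≤ _ := upperExp_mono h𝒬 (hhq.abs_add_rpow hq0 (by fun_prop) hY hYq) (hfirst.add hsecond)
        fun ω => abs_add_rpow_le hq _ _
    _ ≤ _ := upperExp_add_le h𝒬 hfirst hsecond
    _ ≤ _ := by
      gcongr
      · refine (upperExp_add_le h𝒬 hhq (hcross.const_mul hq0)).trans_eq ?_
        rw [upperExp_const_mul hq0, hcross0, mul_zero, add_zero]
      · rw [upperExp_const_mul hC]
        gcongr
        exact upperExp_add_le h𝒬 hquad hYq

end PengIndep

section PartialSum

variable {X : ℕ → Ω → ℝ} {q M : ℝ}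

lemma measurable_partialSum (hmeas : ∀ i, Measurable (X i)) (n : ℕ) :
    Measurable (partialSum X n) :=
  Finset.measurable_fun_sum _ fun i _ => hmeas i

lemma measurable_normalizedSum (hmeas : ∀ i, Measurable (X i)) (n : ℕ) :
    Measurable (normalizedSum X n) :=
  (measurable_partialSum hmeas n).div_const _

lemma hasFiniteUpperExp_abs_partialSum_rpow (hprob : ∀ P ∈ 𝒬, IsProbabilityMeasure P) (hq : 0 ≤ q)
    (hmeas : ∀ i, Measurable (X i)) (hmom : ∀ i, HasFiniteUpperExp 𝒬 fun ω => |X i ω| ^ q)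
    (n : ℕ) : HasFiniteUpperExp 𝒬 fun ω => |partialSum X n ω| ^ q := by
  induction n with
  | zero => exact hasFiniteUpperExp_const hprob (|0| ^ q)
  | succ n ih =>
    simp only [partialSum_succ]
    exact ih.abs_add_rpow hq (measurable_partialSum hmeas n) (hmeas n) (hmom n)

theorem exists_upperExp_abs_partialSum_succ_rpow_le (h𝒬 : 𝒬.Nonempty)
    (hprob : ∀ P ∈ 𝒬, IsProbabilityMeasure P) (hq : 2 ≤ q) (hmeas : ∀ i, Measurable (X i))
    (hindep : ∀ i, PengIndep 𝒬 (fun ω (j : Fin (i + 1)) => X j ω) (X (i + 1)))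
    (hmean : ∀ i, upperExp 𝒬 (X i) = 0) (hmean' : ∀ i, upperExp 𝒬 (fun ω => -X i ω) = 0)
    (hmom : ∀ i, HasFiniteUpperExp 𝒬 fun ω => |X i ω| ^ q)
    (hM : ∀ i, upperExp 𝒬 (fun ω => |X i ω| ^ q) ≤ M) :
    ∃ K, 0 ≤ K ∧ ∀ n : ℕ,
      upperExp 𝒬 (fun ω => |partialSum X (n + 1) ω| ^ q) ≤ K * ((n : ℝ) + 1) ^ (q / 2) := by
  have hq0 : 0 ≤ q := two_pos.le.trans hq
  have hM0 : 0 ≤ M := (upperExp_nonneg fun ω => by positivity).trans (hM 0)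
  set C := q * (q + 1) * 2 ^ (q - 2) with hC
  have hC1 : 1 ≤ C := one_le_mul_of_one_le_of_one_le (by nlinarith)
    (Real.one_le_rpow one_le_two (sub_nonneg.2 hq))
  refine exists_le_mul_rpow_of_recursion (A := C * (M + 1)) (B := C * M) (by linarith)
    (by positivity) (by positivity) ?_ fun n t ht => ?_
  · simp only [partialSum_succ, partialSum_zero, zero_add]
    exact (hM 0).trans (le_mul_of_one_le_left hM0 hC1)
  · have hSq := hasFiniteUpperExp_abs_partialSum_rpow hprob hq0 hmeas hmom (n + 1)
    have hsum (ω : Ω) : partialSum X (n + 1) ω = ∑ j : Fin (n + 1), X j ω := Finset.sum_range _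
    have hstep := (hindep n).upperExp_abs_add_rpow_le h𝒬 hprob hq (h := fun z => ∑ j, z j)
      (by fun_prop) (hmeas (n + 1)) (by fun_prop) (hmean (n + 1)) (hmean' (n + 1))
      (by simpa only [hsum] using hSq) (hmom (n + 1))
    simp only [← hsum, ← partialSum_succ, ← hC] at hstep
    have hlow : upperExp 𝒬 (fun ω => |partialSum X (n + 1) ω| ^ (q - 2))
        ≤ (upperExp 𝒬 (fun ω => |partialSum X (n + 1) ω| ^ q) + t ^ (q / 2)) / t := by
      rw [le_div_iff₀' ht]
      exact mul_upperExp_abs_rpow_sub_two_le h𝒬 hprob hq ht.le (measurable_partialSum hmeas _) hSq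
    have hsq := (upperExp_sq_le h𝒬 hprob hq (hmeas (n + 1)) (hmom (n + 1))).trans
      (add_le_add_left (hM (n + 1)) 1)
    have hprod := mul_le_mul hlow hsq (upperExp_nonneg fun ω => sq_nonneg _)
      ((upperExp_nonneg fun ω => by positivity).trans hlow)
    have := mul_le_mul_of_nonneg_left (add_le_add hprod (hM (n + 1))) (zero_le_one.trans hC1)
    linarith

theorem exists_upperExp_abs_normalizedSum_rpow_le (h𝒬 : 𝒬.Nonempty)
    (hprob : ∀ P ∈ 𝒬, IsProbabilityMeasure P) (hq : 2 ≤ q) (hmeas : ∀ i, Measurable (X i))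
    (hindep : ∀ i, PengIndep 𝒬 (fun ω (j : Fin (i + 1)) => X j ω) (X (i + 1)))
    (hmean : ∀ i, upperExp 𝒬 (X i) = 0) (hmean' : ∀ i, upperExp 𝒬 (fun ω => -X i ω) = 0)
    (hmom : ∀ i, HasFiniteUpperExp 𝒬 fun ω => |X i ω| ^ q)
    (hM : ∀ i, upperExp 𝒬 (fun ω => |X i ω| ^ q) ≤ M) :
    ∃ K, ∀ n, HasFiniteUpperExp 𝒬 (fun ω => |normalizedSum X n ω| ^ q) ∧
      upperExp 𝒬 (fun ω => |normalizedSum X n ω| ^ q) ≤ K := by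
  obtain ⟨K, hK0, hK⟩ := exists_upperExp_abs_partialSum_succ_rpow_le h𝒬 hprob hq hmeas hindep hmean
    hmean' hmom hM
  have hscale (n : ℕ) (ω : Ω) : |normalizedSum X n ω| ^ q
      = ((n : ℝ) ^ (q / 2))⁻¹ * |partialSum X n ω| ^ q := by
    rw [normalizedSum, abs_div, abs_of_nonneg (Real.sqrt_nonneg _),
      Real.div_rpow (abs_nonneg _) (Real.sqrt_nonneg _), Real.sqrt_eq_rpow,
      ← Real.rpow_mul n.cast_nonneg, one_div_mul_eq_div, div_eq_inv_mul]
  have hscale0 (n : ℕ) : 0 ≤ ((n : ℝ) ^ (q / 2))⁻¹ := by positivity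
  refine ⟨K, fun n => ?_⟩
  simp only [hscale, upperExp_const_mul (hscale0 n)]
  refine ⟨(hasFiniteUpperExp_abs_partialSum_rpow hprob (by linarith) hmeas hmom n).const_mul
    (hscale0 n), ?_⟩
  rw [inv_mul_eq_div]
  cases n with
  | zero => simpa [Real.zero_rpow (by linarith : q / 2 ≠ 0)] using hK0
  | succ n =>
    rw [div_le_iff₀ (by positivity), Nat.cast_succ]
    exact hK n

end PartialSum

-- `IsIIDUnder` compares upper expectations only when both are already finite, so finiteness is
-- transferred through the bounded truncations `min φ N`.
lemma IsIIDUnder.hasFiniteUpperExp_comp (hprob : ∀ P ∈ 𝒬, IsProbabilityMeasure P)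
    {X : ℕ → Ω → ℝ} (hiid : IsIIDUnder 𝒬 X) (hmeas : ∀ i, Measurable (X i)) {φ : ℝ → ℝ}
    (hφ : Measurable φ) (hφ0 : ∀ x, 0 ≤ φ x) (hfin : HasFiniteUpperExp 𝒬 fun ω => φ (X 0 ω))
    (i : ℕ) : HasFiniteUpperExp 𝒬 fun ω => φ (X i ω) := by
  have hmin0 (N : ℕ) (x : ℝ) : 0 ≤ min (φ x) N := le_min (hφ0 x) N.cast_nonneg
  have hminfin (N j : ℕ) : HasFiniteUpperExp 𝒬 fun ω => min (φ (X j ω)) N :=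
    (hasFiniteUpperExp_const hprob N).mono ((hφ.comp (hmeas j)).min measurable_const) fun ω => by
      rw [abs_of_nonneg (hmin0 N _)]
      exact min_le_right _ _
  have hint (P : Measure Ω) (hP : P ∈ 𝒬) : Integrable (fun ω => φ (X i ω)) P ∧
      ∫ ω, φ (X i ω) ∂P ≤ upperExp 𝒬 fun ω => φ (X 0 ω) := by
    have := hprob P hP
    refine integrable_and_integral_le_of_forall_integral_min_le (hφ.comp (hmeas i))
      (fun ω => hφ0 _) fun N => ?_
    calc ∫ ω, min (φ (X i ω)) N ∂P
        ≤ upperExp 𝒬 (fun ω => min (φ (X i ω)) N) := (hminfin N i).integral_le hP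
      _ = upperExp 𝒬 (fun ω => min (φ (X 0 ω)) N) :=
          hiid.1 i (fun x => min (φ x) N) (by fun_prop) (hminfin N i) (hminfin N 0)
      _ ≤ upperExp 𝒬 (fun ω => φ (X 0 ω)) :=
          upperExp_mono ⟨P, hP⟩ (hminfin N 0) hfin fun ω => min_le_left _ _
  exact .of_integral_le (fun P hP => (hint P hP).1) fun P hP => (hint P hP).2

theorem clt_polynomial_growth_general {X : ℕ → Ω → ℝ} (h𝒬 : 𝒬.Nonempty)
    (hprob : ∀ P ∈ 𝒬, IsProbabilityMeasure P) (hmeas : ∀ i, Measurable (X i))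
    (hiid : IsIIDUnder 𝒬 X) {q : ℝ} (hq : 2 ≤ q) (hmean : upperExp 𝒬 (X 0) = 0)
    (hmean' : upperExp 𝒬 (fun ω => -X 0 ω) = 0)
    (hmom : HasFiniteUpperExp 𝒬 fun ω => |X 0 ω| ^ q)
    (hcs : ∀ ψ : ℝ → ℝ, Continuous ψ → HasCompactSupport ψ →
      ∃ L : ℝ, Tendsto (fun n => upperExp 𝒬 fun ω => ψ (normalizedSum X n ω)) atTop (𝓝 L))
    {φ : ℝ → ℝ} (hφ : Continuous φ) (hφq : φ =o[cocompact ℝ] fun x => |x| ^ q) :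
    ∃ L : ℝ, Tendsto (fun n => upperExp 𝒬 fun ω => φ (normalizedSum X n ω)) atTop (𝓝 L) := by
  have hmom_all := hiid.hasFiniteUpperExp_comp hprob hmeas (φ := fun x => |x| ^ q) (by fun_prop)
    (fun x => by positivity) hmom
  have habs (i : ℕ) : HasFiniteUpperExp 𝒬 fun ω => |X i ω| :=
    (hmom_all i).abs_of_abs_rpow hprob (one_le_two.trans hq) (hmeas i)
  have hfin (i : ℕ) : HasFiniteUpperExp 𝒬 (X i) := (habs i).mono (hmeas i) fun ω => le_rfl
  have hfin' (i : ℕ) : HasFiniteUpperExp 𝒬 fun ω => -X i ω :=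
    (habs i).mono (hmeas i).neg fun ω => (abs_neg _).le
  obtain ⟨K, hK⟩ := exists_upperExp_abs_normalizedSum_rpow_le h𝒬 hprob hq hmeas hiid.2
    (fun i => (hiid.1 i id measurable_id (hfin i) (hfin 0)).trans hmean)
    (fun i => (hiid.1 i (fun x => -x) measurable_neg (hfin' i) (hfin' 0)).trans hmean') hmom_all
    (fun i => (hiid.1 i (fun x => |x| ^ q) (by fun_prop) (hmom_all i) hmom).le)
  exact exists_tendsto_upperExp_of_isLittleO h𝒬 hprob (measurable_normalizedSum hmeas)
    (fun x => by positivity) (fun n => (hK n).1) (fun n => (hK n).2) hcs hφ hφq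

end UpperExpectation

/-- **Theorem 3.2.** Let `(X_i)` be IID under `E̅` with `E̅[X_1] = E̅[-X_1] = 0` and
`E̅[|X_1|^{p+1}] < ∞` for some `p ≥ 1`.  If `E̅[φ(S̄_n)]` converges for every bounded
continuous `φ` with compact support, then `E̅[φ(S̄_n)]` converges for every continuous
`φ` satisfying the growth condition `|φ(x)| ≤ C (1 + |x|^p)` for some `C > 0`. -/
theorem clt_polynomial_growth {Ω : Type*} [MeasurableSpace Ω]
    (𝒬 : Set (Measure Ω)) (h𝒬 : 𝒬.Nonempty)
    (hprob : ∀ P ∈ 𝒬, IsProbabilityMeasure P)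
    (X : ℕ → Ω → ℝ) (hmeas : ∀ i, Measurable (X i))
    (hiid : IsIIDUnder 𝒬 X)
    (p : ℝ) (hp : 1 ≤ p)
    (hmean : upperExp 𝒬 (X 0) = 0)
    (hmean' : upperExp 𝒬 (fun ω => -X 0 ω) = 0)
    (hmom : HasFiniteUpperExp 𝒬 (fun ω => |X 0 ω| ^ (p + 1)))
    (hcs : ∀ φ : ℝ → ℝ, Continuous φ → HasCompactSupport φ →
      ∃ L : ℝ, Tendsto (fun n => upperExp 𝒬 (fun ω => φ (normalizedSum X n ω)))
        atTop (𝓝 L)) :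
    ∀ φ : ℝ → ℝ, Continuous φ →
      (∃ C : ℝ, 0 < C ∧ ∀ x : ℝ, |φ x| ≤ C * (1 + |x| ^ p)) →
      (∀ n : ℕ, HasFiniteUpperExp 𝒬 (fun ω => φ (normalizedSum X n ω))) →
      ∃ L : ℝ, Tendsto (fun n => upperExp 𝒬 (fun ω => φ (normalizedSum X n ω)))
        atTop (𝓝 L) := by
  rintro φ hφ ⟨C, -, hgrowth⟩ -
  exact clt_polynomial_growth_general h𝒬 hprob hmeas hiid (by linarith) hmean hmean' hmom hcs hφ
    (isLittleO_abs_rpow_of_growth (by linarith) (lt_add_one p) hgrowth)
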